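/- All iterated derivatives of f and of each fN vanish at s_∞: for every j ∈ ℕ and every N ∈ ℕ, iteratedFDeriv ℝ j f s_∞ = 0 and iteratedFDeriv ℝ j fN s_∞ = 0. -/

import Mathlib

/-!
A smooth function `g` that is flat at `c` satisfies `‖D^i g x‖ ≤ C ‖x - c‖ ^ l` near `c`, for every
`l`. A bump `φ (r⁻¹ • (x - s))` of scale `r` centred at distance `O(r)` from `c` lives where
`‖x - c‖ = O(r)`, and its derivatives of order `l` are `O(r⁻¹ ^ l)`. In the Leibniz formula for
`g • φ (r⁻¹ • (· - s))` the powers of `r` therefore cancel, so every derivative of this product is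
bounded uniformly in `r` and `s`. With summable weights the series can then be differentiated
termwise, and each term is flat at `c` because `g` is.
-/

open Set Topology Metric
open scoped ContDiff

section NormedSpace

variable {V W F : Type*} [NormedAddCommGroup V] [NormedSpace ℝ V]
  [NormedAddCommGroup W] [NormedSpace ℝ W] [NormedAddCommGroup F] [NormedSpace ℝ F]

/-- `FlatAt f c` says that all iterated derivatives of `f` vanish at `c`, including the one of
order `0`, i.e. the value `f c`. Since `iteratedFDeriv` has junk values, this notion is meaningful
only for functions that are smooth at `c`. -/
def FlatAt (f : V → F) (c : V) : Prop :=
  ∀ j : ℕ, iteratedFDeriv ℝ j f c = 0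

theorem iteratedFDeriv_comp_smul_sub {φ : V → F} {j : ℕ} (hφ : ContDiff ℝ j φ) (a : ℝ) (s x : V) :
    iteratedFDeriv ℝ j (fun y => φ (a • (y - s))) x =
      a ^ j • iteratedFDeriv ℝ j φ (a • (x - s)) := by
  rw [iteratedFDeriv_comp_sub (f := fun y => φ (a • y)), iteratedFDeriv_comp_const_smul a hφ]

theorem contDiff_comp_smul_sub {n : ℕ∞ω} {φ : V → F} (hφ : ContDiff ℝ n φ) (a : ℝ) (s : V) :
    ContDiff ℝ n (fun y => φ (a • (y - s))) :=
  hφ.comp (contDiff_const.smul (contDiff_id.sub contDiff_const))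

namespace FlatAt

theorem of_eqOn_zero_of_mem_closure {f : V → F} {U : Set V} {c : V} (hf : ContDiff ℝ ∞ f)
    (hU : IsOpen U) (hfU : EqOn f 0 U) (hc : c ∈ closure U) : FlatAt f c := by
  intro j
  have hvanish : U ⊆ {x | iteratedFDeriv ℝ j f x = 0} := by
    intro x hx
    have hnear : f =ᶠ[𝓝 x] 0 := hfU.eventuallyEq_of_mem (hU.mem_nhds hx)
    simpa using (hnear.iteratedFDeriv ℝ j).eq_of_nhds
  have hcont : Continuous (iteratedFDeriv ℝ j f) :=
    hf.continuous_iteratedFDeriv (mod_cast le_top)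
  exact closure_minimal hvanish (isClosed_eq hcont continuous_const) hc

theorem comp {g : W → F} {f : V → W} {c : V} (hg_flat : FlatAt g (f c)) (hg : ContDiff ℝ ∞ g)
    (hf : ContDiff ℝ ∞ f) : FlatAt (g ∘ f) c := by
  intro j
  let D : ℝ := 1 + ∑ i ∈ Finset.range (j + 1), ‖iteratedFDeriv ℝ i f c‖
  have one_le_D : 1 ≤ D := le_add_of_nonneg_right (Finset.sum_nonneg fun _ _ => norm_nonneg _)
  have hD (i : ℕ) (hi : 1 ≤ i) (hij : i ≤ j) : ‖iteratedFDeriv ℝ i f c‖ ≤ D ^ i :=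
    calc ‖iteratedFDeriv ℝ i f c‖
        ≤ ∑ i ∈ Finset.range (j + 1), ‖iteratedFDeriv ℝ i f c‖ :=
          Finset.single_le_sum (f := fun i => ‖iteratedFDeriv ℝ i f c‖)
            (fun _ _ => norm_nonneg _) (Finset.mem_range_succ_iff.2 hij)
      _ ≤ D := le_add_of_nonneg_left zero_le_one
      _ ≤ D ^ i := le_self_pow₀ one_le_D (Nat.one_le_iff_ne_zero.1 hi)
  -- The Faà di Bruno bound is linear in a bound for the derivatives of `g`, which can be `0`.
  have hbound := norm_iteratedFDeriv_comp_le hg hf (mod_cast le_top) c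
    (fun i _ => (norm_eq_zero.2 (hg_flat i)).le) hD
  simpa using hbound

theorem smul {g : V → ℝ} {u : V → F} {c : V} (hg_flat : FlatAt g c) (hg : ContDiff ℝ ∞ g)
    (hu : ContDiff ℝ ∞ u) : FlatAt (fun x => g x • u x) c := by
  intro j
  have hbound := norm_iteratedFDeriv_smul_le hg hu c (n := j) (mod_cast le_top)
  simpa [hg_flat _] using hbound

theorem tsum {ι : Type*} [CompleteSpace F] {f : ι → V → F} {v : ℕ → ι → ℝ} {c : V}
    (hf_flat : ∀ k, FlatAt (f k) c) (hf : ∀ k, ContDiff ℝ ∞ (f k)) (hv : ∀ j, Summable (v j))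
    (hfv : ∀ j k x, ‖iteratedFDeriv ℝ j (f k) x‖ ≤ v j k) :
    FlatAt (fun x => ∑' k, f k x) c := by
  intro j
  rw [iteratedFDeriv_tsum_apply (N := ⊤) hf (fun j _ => hv j) (fun j k x _ => hfv j k x) le_top]
  simp only [hf_flat _ j, tsum_zero]

theorem exists_norm_iteratedFDeriv_le [ProperSpace V] {g : V → F} {c : V} (hg_flat : FlatAt g c)
    (hg : ContDiff ℝ ∞ g) (R : ℝ) (i l : ℕ) :
    ∃ C, 0 ≤ C ∧ ∀ x ∈ closedBall c R, ‖iteratedFDeriv ℝ i g x‖ ≤ C * ‖x - c‖ ^ l := by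
  induction l generalizing i with
  | zero =>
    have hcont : Continuous (iteratedFDeriv ℝ i g) :=
      hg.continuous_iteratedFDeriv (mod_cast le_top)
    obtain ⟨C, hC⟩ := (isCompact_closedBall c R).exists_bound_of_continuousOn hcont.continuousOn
    exact ⟨max C 0, le_max_right _ _, fun x hx => by simpa using .inl (hC x hx)⟩
  | succ l ih =>
    obtain ⟨C, hC0, hC⟩ := ih (i + 1)
    refine ⟨C, hC0, fun x hx => ?_⟩
    have hderiv (y : V) (hy : y ∈ closedBall c ‖x - c‖) :
        ‖fderiv ℝ (iteratedFDeriv ℝ i g) y‖ ≤ C * ‖x - c‖ ^ l := by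
      rw [mem_closedBall_iff_norm] at hx hy
      rw [norm_fderiv_iteratedFDeriv]
      calc ‖iteratedFDeriv ℝ (i + 1) g y‖
          ≤ C * ‖y - c‖ ^ l := hC y (mem_closedBall_iff_norm.2 (hy.trans hx))
        _ ≤ C * ‖x - c‖ ^ l := by gcongr
    have hdiff : Differentiable ℝ (iteratedFDeriv ℝ i g) :=
      hg.differentiable_iteratedFDeriv (mod_cast ENat.natCast_lt_top i)
    have hmean := (convex_closedBall c ‖x - c‖).norm_image_sub_le_of_norm_fderiv_le
      (fun y _ => hdiff y) hderiv (mem_closedBall_self (norm_nonneg _))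
      (mem_closedBall_iff_norm.2 le_rfl)
    rwa [hg_flat i, sub_zero, mul_assoc, ← pow_succ] at hmean

section Bumps

variable {g : V → ℝ} {φ : V → F} {c : V}

theorem exists_norm_iteratedFDeriv_mul_norm_iteratedFDeriv_bump_le [ProperSpace V]
    (hg_flat : FlatAt g c) (hg : ContDiff ℝ ∞ g) (hφ : ContDiff ℝ ∞ φ)
    (hφ_supp : HasCompactSupport φ) {M : ℝ} (hM : 0 ≤ M) (R : ℝ) (i l : ℕ) :
    ∃ C, ∀ (r : ℝ) (s x : V), 0 < r → r ≤ R → ‖s - c‖ ≤ M * r →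
      ‖iteratedFDeriv ℝ i g x‖ * ‖iteratedFDeriv ℝ l (fun y => φ (r⁻¹ • (y - s))) x‖ ≤ C := by
  obtain ⟨ρ, hρ, hφρ⟩ := hφ_supp.isBounded.exists_pos_norm_le
  obtain ⟨A, hA0, hA⟩ := hg_flat.exists_norm_iteratedFDeriv_le hg ((ρ + M) * R) i l
  obtain ⟨B, hB⟩ := (hφ_supp.iteratedFDeriv (𝕜 := ℝ) l).exists_bound_of_continuous
    (hφ.continuous_iteratedFDeriv (mod_cast le_top))
  have hB0 : 0 ≤ B := (norm_nonneg _).trans (hB 0)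
  refine ⟨A * (ρ + M) ^ l * B, fun r s x hr hrR hs => ?_⟩
  rw [iteratedFDeriv_comp_smul_sub (hφ.of_le (mod_cast le_top)), norm_smul, norm_pow, norm_inv,
    Real.norm_of_nonneg hr.le]
  by_cases hx : r⁻¹ • (x - s) ∈ tsupport φ
  · have hxs : ‖x - s‖ ≤ ρ * r := by
      have := hφρ _ hx
      rwa [norm_smul, norm_inv, Real.norm_of_nonneg hr.le, inv_mul_le_iff₀ hr, mul_comm] at this
    have hxc : ‖x - c‖ ≤ (ρ + M) * r :=
      calc ‖x - c‖ ≤ ‖x - s‖ + ‖s - c‖ := norm_sub_le_norm_sub_add_norm_sub x s c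
        _ ≤ ρ * r + M * r := add_le_add hxs hs
        _ = (ρ + M) * r := (add_mul _ _ _).symm
    have hxR : x ∈ closedBall c ((ρ + M) * R) :=
      mem_closedBall_iff_norm.2 (hxc.trans (by gcongr))
    calc ‖iteratedFDeriv ℝ i g x‖ * (r⁻¹ ^ l * ‖iteratedFDeriv ℝ l φ (r⁻¹ • (x - s))‖)
        ≤ A * ((ρ + M) * r) ^ l * (r⁻¹ ^ l * B) := by
          gcongr
          · exact (hA x hxR).trans (by gcongr)
          · exact hB _
      _ = A * (ρ + M) ^ l * B := by
          rw [mul_pow, inv_pow]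
          field_simp
  · have hzero : iteratedFDeriv ℝ l φ (r⁻¹ • (x - s)) = 0 :=
      Function.notMem_support.1 fun h => hx (support_iteratedFDeriv_subset l h)
    rw [hzero, norm_zero, mul_zero, mul_zero]
    positivity

theorem exists_norm_iteratedFDeriv_smul_bump_le [ProperSpace V]
    (hg_flat : FlatAt g c) (hg : ContDiff ℝ ∞ g) (hφ : ContDiff ℝ ∞ φ)
    (hφ_supp : HasCompactSupport φ) {M : ℝ} (hM : 0 ≤ M) (R : ℝ) (j : ℕ) :
    ∃ C, ∀ (r : ℝ) (s x : V), 0 < r → r ≤ R → ‖s - c‖ ≤ M * r →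
      ‖iteratedFDeriv ℝ j (fun y => g y • φ (r⁻¹ • (y - s))) x‖ ≤ C := by
  choose C hC using fun i =>
    hg_flat.exists_norm_iteratedFDeriv_mul_norm_iteratedFDeriv_bump_le hg hφ hφ_supp hM R i (j - i)
  refine ⟨∑ i ∈ Finset.range (j + 1), j.choose i * C i, fun r s x hr hrR hs => ?_⟩
  refine (norm_iteratedFDeriv_smul_le hg (contDiff_comp_smul_sub hφ r⁻¹ s) x
    (mod_cast le_top)).trans (Finset.sum_le_sum fun i _ => ?_)
  rw [mul_assoc]
  gcongr
  exact hC i r s x hr hrR hs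

theorem smul_sum_bumps {ι : Type*} (hg_flat : FlatAt g c) (hg : ContDiff ℝ ∞ g)
    (hφ : ContDiff ℝ ∞ φ) (t : Finset ι) (a r : ι → ℝ) (s : ι → V) :
    FlatAt (fun x => g x • ∑ k ∈ t, a k • φ ((r k)⁻¹ • (x - s k))) c :=
  hg_flat.smul hg <| ContDiff.sum fun k _ =>
    contDiff_const.smul (contDiff_comp_smul_sub hφ (r k)⁻¹ (s k))

theorem smul_tsum_bumps {ι : Type*} [ProperSpace V] [CompleteSpace F] (hg_flat : FlatAt g c)
    (hg : ContDiff ℝ ∞ g) (hφ : ContDiff ℝ ∞ φ) (hφ_supp : HasCompactSupport φ)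
    {a r : ι → ℝ} {s : ι → V} {M R : ℝ} (ha : Summable a) (hr : ∀ k, 0 < r k)
    (hrR : ∀ k, r k ≤ R) (hM : 0 ≤ M) (hs : ∀ k, ‖s k - c‖ ≤ M * r k) :
    FlatAt (fun x => g x • ∑' k, a k • φ ((r k)⁻¹ • (x - s k))) c := by
  let u (k : ι) (x : V) : F := g x • φ ((r k)⁻¹ • (x - s k))
  have hu (k : ι) : ContDiff ℝ ∞ (u k) := hg.smul (contDiff_comp_smul_sub hφ (r k)⁻¹ (s k))
  have hu_flat (k : ι) : FlatAt (fun x => a k • u k x) c := by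
    have := hg_flat.smul_sum_bumps hg hφ {k} a r s
    simpa only [u, Finset.sum_singleton, smul_comm (a k)] using this
  choose C hC using hg_flat.exists_norm_iteratedFDeriv_smul_bump_le hg hφ hφ_supp hM R
  have hbound (j : ℕ) (k : ι) (x : V) :
      ‖iteratedFDeriv ℝ j (fun x => a k • u k x) x‖ ≤ ‖a k‖ * C j := by
    rw [iteratedFDeriv_const_smul_apply' ((hu k).of_le (mod_cast le_top)).contDiffAt, norm_smul]
    gcongr
    exact hC j (r k) (s k) x (hr k) (hrR k) (hs k)
  have hseries : (fun x => g x • ∑' k, a k • φ ((r k)⁻¹ • (x - s k))) =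
      fun x => ∑' k, a k • u k x := by
    funext x
    simp only [u, ← tsum_const_smul'', smul_comm (g x)]
  rw [hseries]
  exact FlatAt.tsum hu_flat (fun k => contDiff_const.smul (hu k))
    (fun j => ha.norm.mul_right (C j)) hbound

end Bumps

end FlatAt

end NormedSpace

theorem flatAt_expNegInvGlue : FlatAt expNegInvGlue 0 :=
  .of_eqOn_zero_of_mem_closure expNegInvGlue.contDiff isOpen_Iio
    (fun _ hx => expNegInvGlue.zero_of_nonpos (mem_Iio.1 hx).le) (by simp)

theorem eq_expNegInvGlue_norm_sub_sq {X : Type*} [NormedAddCommGroup X] {E : X → ℝ} {c : X}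
    (hE : ∀ x, x ≠ c → E x = Real.exp (-1 / ‖x - c‖ ^ 2)) (hEc : E c = 0) :
    E = fun x => expNegInvGlue (‖x - c‖ ^ 2) := by
  funext x
  obtain rfl | hx := eq_or_ne x c
  · simp [hEc]
  · have hpos : 0 < ‖x - c‖ ^ 2 := pow_pos (norm_sub_pos_iff.2 hx) 2
    rw [hE x hx, expNegInvGlue, if_neg hpos.not_ge, neg_div, one_div]

section InnerProductSpace

variable {V : Type*} [NormedAddCommGroup V] [InnerProductSpace ℝ V]

theorem contDiff_norm_sub_sq (c : V) : ContDiff ℝ ∞ fun x : V => ‖x - c‖ ^ 2 :=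
  (contDiff_norm_sq ℝ).comp (contDiff_id.sub contDiff_const)

theorem contDiff_expNegInvGlue_norm_sub_sq (c : V) :
    ContDiff ℝ ∞ fun x : V => expNegInvGlue (‖x - c‖ ^ 2) :=
  expNegInvGlue.contDiff.comp (contDiff_norm_sub_sq c)

theorem flatAt_expNegInvGlue_norm_sub_sq (c : V) :
    FlatAt (fun x : V => expNegInvGlue (‖x - c‖ ^ 2)) c :=
  FlatAt.comp (f := fun x => ‖x - c‖ ^ 2) (by simpa using flatAt_expNegInvGlue)
    expNegInvGlue.contDiff (contDiff_norm_sub_sq c)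

theorem stmt_5_general [FiniteDimensional ℝ V] {h : V → ℝ} (hsmooth : ContDiff ℝ ∞ h)
    (hsupp : HasCompactSupport h) {sinf z : V} (hz : z ≠ 0) {s : ℕ → V} {r : ℕ → ℝ}
    (hs : ∀ k : ℕ, s k = sinf - (3 * (2 : ℝ) ^ (-(k : ℤ))) • z)
    (hr : ∀ k : ℕ, r k = (2 : ℝ) ^ (-(k : ℤ)) * ‖z‖)
    {f : ℕ → V → ℝ} (hf : ∀ k x, f k x = r k * h ((r k)⁻¹ • (x - s k)))
    {Einf : V → ℝ} (hEinf : ∀ x, x ≠ sinf → Einf x = Real.exp (-1 / ‖x - sinf‖ ^ 2))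
    (hEinf0 : Einf sinf = 0)
    {fN : ℕ → V → ℝ}
    (hfN : ∀ N x, fN N x = Einf x * ∑ k ∈ Finset.range (N + 1), (4 : ℝ) ^ (-(k : ℤ)) * f k x)
    {F : V → ℝ} (hF : ∀ x, F x = Einf x * ∑' k : ℕ, (4 : ℝ) ^ (-(k : ℤ)) * f k x) :
    FlatAt F sinf ∧ ∀ N, FlatAt (fN N) sinf := by
  obtain rfl := eq_expNegInvGlue_norm_sub_sq hEinf hEinf0
  have hE_flat := flatAt_expNegInvGlue_norm_sub_sq sinf
  have hE := contDiff_expNegInvGlue_norm_sub_sq sinf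
  have hr_pos (k : ℕ) : 0 < r k := by
    rw [hr]
    positivity
  have hr_le (k : ℕ) : r k ≤ ‖z‖ := by
    rw [hr]
    exact mul_le_of_le_one_left (norm_nonneg z)
      (zpow_le_one_of_nonpos₀ one_le_two (neg_nonpos.2 k.cast_nonneg))
  have hs_dist (k : ℕ) : ‖s k - sinf‖ ≤ 3 * r k := by
    rw [hs, sub_sub_cancel_left, norm_neg, norm_smul, hr, ← mul_assoc,
      Real.norm_of_nonneg (by positivity)]
  have ha : Summable fun k : ℕ => (4 : ℝ) ^ (-(k : ℤ)) * r k := by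
    have hgeom : Summable fun k : ℕ => (4 : ℝ)⁻¹ ^ k * ‖z‖ :=
      (summable_geometric_of_lt_one (by norm_num) (by norm_num)).mul_right _
    refine hgeom.of_nonneg_of_le (fun k => mul_nonneg (by positivity) (hr_pos k).le) fun k => ?_
    rw [zpow_neg, zpow_natCast, inv_pow]
    gcongr
    exact hr_le k
  obtain rfl := funext hF
  obtain rfl : fN = _ := funext₂ hfN
  simp only [hf, ← mul_assoc _ (r _)]
  exact ⟨hE_flat.smul_tsum_bumps hE hsmooth hsupp ha hr_pos hr_le zero_le_three hs_dist,
    fun N => hE_flat.smul_sum_bumps hE hsmooth (Finset.range (N + 1)) _ r s⟩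

end InnerProductSpace

theorem stmt_5 (n : ℕ) (hn : 1 ≤ n)
    (h : EuclideanSpace ℝ (Fin n) → ℝ) (hsmooth : ContDiff ℝ (⊤ : ℕ∞) h)
    (hpos : ∀ x : EuclideanSpace ℝ (Fin n), ‖x‖ < 1 → 0 < h x)
    (hzero : ∀ x : EuclideanSpace ℝ (Fin n), 1 ≤ ‖x‖ → h x = 0)
    (sinf z : EuclideanSpace ℝ (Fin n)) (hz : z ≠ 0)
    (s : ℕ → EuclideanSpace ℝ (Fin n)) (r : ℕ → ℝ)
    (hs : ∀ k : ℕ, s k = sinf - (3 * (2 : ℝ) ^ (-(k : ℤ))) • z)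
    (hr : ∀ k : ℕ, r k = (2 : ℝ) ^ (-(k : ℤ)) * ‖z‖)
    (f : ℕ → EuclideanSpace ℝ (Fin n) → ℝ)
    (hf : ∀ (k : ℕ) (x : EuclideanSpace ℝ (Fin n)),
      f k x = r k * h ((r k)⁻¹ • (x - s k)))
    (Einf : EuclideanSpace ℝ (Fin n) → ℝ)
    (hEinf : ∀ x : EuclideanSpace ℝ (Fin n), x ≠ sinf →
      Einf x = Real.exp (-1 / ‖x - sinf‖ ^ 2))
    (hEinf0 : Einf sinf = 0)
    (fN : ℕ → EuclideanSpace ℝ (Fin n) → ℝ)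
    (hfN : ∀ (N : ℕ) (x : EuclideanSpace ℝ (Fin n)),
      fN N x = Einf x * ∑ k ∈ Finset.range (N + 1), (4 : ℝ) ^ (-(k : ℤ)) * f k x)
    (F : EuclideanSpace ℝ (Fin n) → ℝ)
    (hF : ∀ x : EuclideanSpace ℝ (Fin n),
      F x = Einf x * ∑' k : ℕ, (4 : ℝ) ^ (-(k : ℤ)) * f k x) :
    ∀ j N : ℕ,
      iteratedFDeriv ℝ j F sinf = 0 ∧ iteratedFDeriv ℝ j (fN N) sinf = 0 := by
  have hsupp : HasCompactSupport h :=
    .intro (isCompact_closedBall 0 1) fun x hx =>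
      hzero x (not_le.1 (mt mem_closedBall_zero_iff.2 hx)).le
  have hflat := stmt_5_general hsmooth hsupp hz hs hr hf hEinf hEinf0 hfN hF
  exact fun j N => ⟨hflat.1 j, hflat.2 N j⟩
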